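/- arXiv:1404.1093 — 4 statements merged into one kernel-verified Lean document; each statement's English description precedes it below -/
import Mathlib

section
/- For every positive integer N and all integers i, j with 1 ≤ i, j ≤ N, p(N,i,j) + p(N,j,i) = C(2N,N). -/
/-!
Complementation `A ↦ {1,…,2N} \ A` is an involution on the `N`-element subsets that exchanges
`A` with its complement. It therefore turns the sets counted by `binP N j i` into those whose
`i`-th smallest element lies below the `j`-th smallest element of the complement. Since these two
elements belong to disjoint sets they are never equal, so this is exactly the negation of the
condition counted by `binP N i j`, and the two counts add up to the number of `N`-element subsets.
-/

/-- `binP N i j` is the number of `N`-element subsets `A` of `{1,…,2N}` such that the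
`i`-th smallest element of `A` is strictly greater than the `j`-th smallest element of
the complement `{1,…,2N} \\ A` (for `1 ≤ i, j ≤ N`; by convention `0` outside that range,
in particular when `i = 0` or `j = N + 1`). -/
def binP (N i j : ℕ) : ℕ :=
  if 1 ≤ i ∧ i ≤ N ∧ 1 ≤ j ∧ j ≤ N then
    (((Finset.Icc 1 (2 * N)).powersetCard N).filter fun A =>
      ((Finset.Icc 1 (2 * N) \ A).sort (· ≤ ·)).getD (j - 1) 0 <
        ((A.sort (· ≤ ·))).getD (i - 1) 0).card
  else 0

/-- An in-range entry of the sorted list of `s` is an element of `s`, so the default value of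
`getD` plays no role. -/
lemma sort_getD_mem (s : Finset ℕ) (k : ℕ) (hk : k < s.card) :
    (s.sort (· ≤ ·)).getD k 0 ∈ s := by
  have hk' : k < (s.sort (· ≤ ·)).length := by simpa using hk
  rw [List.getD_eq_getElem _ _ hk']
  exact (Finset.mem_sort (· ≤ ·)).1 (List.getElem_mem hk')

lemma compl_mem_powersetCard {N : ℕ} {A : Finset ℕ}
    (hA : A ∈ (Finset.Icc 1 (2 * N)).powersetCard N) :
    Finset.Icc 1 (2 * N) \ A ∈ (Finset.Icc 1 (2 * N)).powersetCard N := by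
  rw [Finset.mem_powersetCard] at hA ⊢
  refine ⟨Finset.sdiff_subset, ?_⟩
  rw [Finset.card_sdiff_of_subset hA.1, hA.2, Nat.card_Icc]
  omega

/-- `p(N,i,j) + p(N,j,i) = C(2N,N)`. -/
theorem p_add_p_swap (N i j : ℕ) (hN : 0 < N) (hi : 1 ≤ i) (hi' : i ≤ N)
    (hj : 1 ≤ j) (hj' : j ≤ N) :
    binP N i j + binP N j i = (2 * N).choose N := by
  have hcard : ((Finset.Icc 1 (2 * N)).powersetCard N).card = (2 * N).choose N := by
    simp
  unfold binP
  rw [if_pos ⟨hi, hi', hj, hj'⟩, if_pos ⟨hj, hj', hi, hi'⟩, ← hcard,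
    ← Finset.card_filter_add_card_filter_not (s := (Finset.Icc 1 (2 * N)).powersetCard N)
      (fun A => ((Finset.Icc 1 (2 * N) \ A).sort (· ≤ ·)).getD (j - 1) 0 <
        ((A.sort (· ≤ ·))).getD (i - 1) 0)]
  congr 1
  have hinv : ∀ A ∈ (Finset.Icc 1 (2 * N)).powersetCard N,
      Finset.Icc 1 (2 * N) \ (Finset.Icc 1 (2 * N) \ A) = A := fun A hA =>
    Finset.sdiff_sdiff_eq_self (Finset.mem_powersetCard.1 hA).1
  refine Finset.card_nbij' (fun A => Finset.Icc 1 (2 * N) \ A)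
    (fun A => Finset.Icc 1 (2 * N) \ A) ?_ ?_ ?_ ?_
  · intro A hA
    obtain ⟨hA, hlt⟩ := Finset.mem_filter.1 hA
    refine Finset.mem_filter.2 ⟨compl_mem_powersetCard hA, ?_⟩
    rw [hinv A hA]
    exact hlt.not_gt
  · intro A hA
    obtain ⟨hA, hnlt⟩ := Finset.mem_filter.1 hA
    have hB := compl_mem_powersetCard hA
    refine Finset.mem_filter.2 ⟨hB, ?_⟩
    rw [hinv A hA]
    -- The two entries lie in `A` and in its complement, so `≤` improves to `<`.
    have ha := sort_getD_mem A (i - 1) (by rw [(Finset.mem_powersetCard.1 hA).2]; omega)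
    have hb := sort_getD_mem (Finset.Icc 1 (2 * N) \ A) (j - 1)
      (by rw [(Finset.mem_powersetCard.1 hB).2]; omega)
    refine lt_of_le_of_ne (not_lt.1 hnlt) fun h => ?_
    rw [h] at ha
    exact (Finset.mem_sdiff.1 hb).2 ha
  · intro A hA
    exact hinv A (Finset.mem_filter.1 hA).1
  · intro A hA
    exact hinv A (Finset.mem_filter.1 hA).1
end

section
/- (Symmetry about the anti-main diagonal) For every positive integer N and all integers i, j with 1 ≤ i, j ≤ N, p(N,i,j) = p(N, N+1−j, N+1−i). -/
/-- The reflection `x ↦ 2N + 1 - x` applied to the complement of `A` in `{1,…,2N}`. -/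
def flipCompl (N : ℕ) (A : Finset ℕ) : Finset ℕ :=
  (Finset.Icc 1 (2 * N) \ A).image fun x => 2 * N + 1 - x

theorem reflect_injOn {N : ℕ} {S : Finset ℕ} (hS : S ⊆ Finset.Icc 1 (2 * N)) :
    Set.InjOn (fun x => 2 * N + 1 - x) (S : Set ℕ) := by
  intro x hx y hy h
  have hx' := Finset.mem_Icc.1 (hS hx)
  have hy' := Finset.mem_Icc.1 (hS hy)
  simp only at h
  omega

theorem sort_image_reflect {N : ℕ} {S : Finset ℕ} (hS : S ⊆ Finset.Icc 1 (2 * N)) :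
    (S.image fun x => 2 * N + 1 - x).sort (· ≤ ·) =
      ((S.sort (· ≤ ·)).map fun x => 2 * N + 1 - x).reverse := by
  have hnd : ((S.sort (· ≤ ·)).map fun x => 2 * N + 1 - x).reverse.Nodup := by
    rw [List.nodup_reverse]
    refine List.Nodup.map_on ?_ (Finset.sort_nodup _ _)
    intro x hx y hy h
    exact reflect_injOn hS (by simpa using hx) (by simpa using hy) h
  have hset : (S.image fun x => 2 * N + 1 - x) =
      ((S.sort (· ≤ ·)).map fun x => 2 * N + 1 - x).reverse.toFinset := by
    ext x
    simp
  rw [hset, List.toFinset_sort _ hnd, List.pairwise_reverse, List.pairwise_map]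
  exact (Finset.pairwise_sort S (· ≤ ·)).imp fun h => by omega

/-- Reflection reverses ranks; indices here are zero-based. -/
theorem getD_sort_image_reflect {N k : ℕ} {S : Finset ℕ} (hS : S ⊆ Finset.Icc 1 (2 * N))
    (hc : S.card = N) (hk : k < N) :
    ((S.image fun x => 2 * N + 1 - x).sort (· ≤ ·)).getD (N - 1 - k) 0 =
      2 * N + 1 - (S.sort (· ≤ ·)).getD k 0 := by
  have hl : (S.sort (· ≤ ·)).length = N := by rw [Finset.length_sort, hc]
  have hidx : N - 1 - (N - 1 - k) = k := by omega
  rw [sort_image_reflect hS, List.getD_eq_getElem _ _ (by simp; omega),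
    List.getD_eq_getElem _ _ (by omega)]
  simp [hc, hidx]

theorem getD_sort_mem_Icc {N k : ℕ} {S : Finset ℕ} (hS : S ⊆ Finset.Icc 1 (2 * N))
    (hc : S.card = N) (hk : k < N) :
    (S.sort (· ≤ ·)).getD k 0 ∈ Finset.Icc 1 (2 * N) := by
  have hl : (S.sort (· ≤ ·)).length = N := by rw [Finset.length_sort, hc]
  rw [List.getD_eq_getElem _ _ (by omega)]
  exact hS ((Finset.mem_sort (· ≤ ·)).1 (List.getElem_mem _))

theorem compl_flipCompl {N : ℕ} {A : Finset ℕ} (hA : A ⊆ Finset.Icc 1 (2 * N)) :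
    Finset.Icc 1 (2 * N) \ flipCompl N A = A.image fun x => 2 * N + 1 - x := by
  ext x
  simp only [flipCompl, Finset.mem_sdiff, Finset.mem_image, Finset.mem_Icc]
  constructor
  · rintro ⟨hx, h⟩
    by_contra hne
    exact h ⟨2 * N + 1 - x, ⟨by omega, fun hm => hne ⟨_, hm, by omega⟩⟩, by omega⟩
  · rintro ⟨a, ha, rfl⟩
    have ha' := Finset.mem_Icc.1 (hA ha)
    refine ⟨by omega, ?_⟩
    rintro ⟨b, ⟨hb, hbA⟩, hab⟩
    have hba : b = a := by omega
    exact hbA (hba ▸ ha)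

theorem flipCompl_flipCompl {N : ℕ} {A : Finset ℕ} (hA : A ⊆ Finset.Icc 1 (2 * N)) :
    flipCompl N (flipCompl N A) = A := by
  rw [flipCompl, compl_flipCompl hA, Finset.image_image]
  conv_rhs => rw [← Finset.image_id (s := A)]
  refine Finset.image_congr fun x hx => ?_
  have hx' := Finset.mem_Icc.1 (hA hx)
  simp only [Function.comp_apply, id]
  omega

/-- The injection `flipCompl` gives one inequality; the reverse one is an instance of it, since
`(i, j) ↦ (N+1-j, N+1-i)` is an involution. -/
theorem binP_le_reflect (N i j : ℕ) (hi : 1 ≤ i) (hi' : i ≤ N) (hj : 1 ≤ j) (hj' : j ≤ N) :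
    binP N i j ≤ binP N (N + 1 - j) (N + 1 - i) := by
  rw [binP, binP, if_pos (by omega), if_pos (by omega)]
  refine Finset.card_le_card_of_injOn (flipCompl N) ?_ ?_
  · intro A hA
    simp only [Finset.coe_filter, Finset.mem_powersetCard, Set.mem_ofPred_eq] at hA ⊢
    obtain ⟨⟨hsub, hcard⟩, hlt⟩ := hA
    have hCsub : Finset.Icc 1 (2 * N) \ A ⊆ Finset.Icc 1 (2 * N) := Finset.sdiff_subset
    have hCcard : (Finset.Icc 1 (2 * N) \ A).card = N := by
      rw [Finset.card_sdiff_of_subset hsub, hcard, Nat.card_Icc]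
      omega
    refine ⟨⟨?_, ?_⟩, ?_⟩
    · intro x hx
      obtain ⟨y, hy, rfl⟩ := Finset.mem_image.1 hx
      have hy' := Finset.mem_Icc.1 (hCsub hy)
      exact Finset.mem_Icc.2 (by omega)
    · rw [flipCompl, Finset.card_image_of_injOn (reflect_injOn hCsub), hCcard]
    · have hi0 : N + 1 - i - 1 = N - 1 - (i - 1) := by omega
      have hj0 : N + 1 - j - 1 = N - 1 - (j - 1) := by omega
      rw [compl_flipCompl hsub, flipCompl, hi0, hj0,
        getD_sort_image_reflect hsub hcard (by omega),
        getD_sort_image_reflect hCsub hCcard (by omega)]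
      -- Truncated subtraction from `2N + 1` is strictly antitone only on arguments up to `2N + 1`.
      have ha := Finset.mem_Icc.1 (getD_sort_mem_Icc (k := i - 1) hsub hcard (by omega))
      omega
  · intro A hA B hB h
    simp only [Finset.coe_filter, Finset.mem_powersetCard, Set.mem_ofPred_eq] at hA hB
    rw [← flipCompl_flipCompl hA.1.1, h, flipCompl_flipCompl hB.1.1]

/-- Symmetry about the anti-main diagonal: `p(N,i,j) = p(N, N+1−j, N+1−i)`. -/
theorem amd_symmetry (N i j : ℕ) (hN : 0 < N) (hi : 1 ≤ i) (hi' : i ≤ N)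
    (hj : 1 ≤ j) (hj' : j ≤ N) :
    binP N i j = binP N (N + 1 - j) (N + 1 - i) := by
  refine le_antisymm (binP_le_reflect N i j hi hi' hj hj') ?_
  have h := binP_le_reflect N (N + 1 - j) (N + 1 - i) (by omega) (by omega) (by omega) (by omega)
  rwa [show N + 1 - (N + 1 - i) = i by omega, show N + 1 - (N + 1 - j) = j by omega] at h
end

section
/- (Mixed Monge property, unit squares) For every positive integer N and all integers i, j with 1 ≤ i ≤ N−1 and 1 ≤ j ≤ N−1: if i < j then p(N,i,j) + p(N,i+1,j+1) < p(N,i+1,j) + p(N,i,j+1); if i > j then p(N,i,j) + p(N,i+1,j+1) > p(N,i+1,j) + p(N,i,j+1); and if i = j then p(N,i,j) + p(N,i+1,j+1) = p(N,i+1,j) + p(N,i,j+1). -/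
/-- The `i`-th element of `A` exceeds the `j`-th element of its complement exactly when fewer than
`i` of the first `i + j - 1` numbers lie in `A`. -/
lemma sort_lt_sort_iff {N i j : ℕ} (hi : 1 ≤ i) (hi' : i ≤ N) (hj : 1 ≤ j) (hj' : j ≤ N)
    {A : Finset ℕ} (hA : A ⊆ Finset.Icc 1 (2 * N)) (hc : A.card = N) :
    ((Finset.Icc 1 (2 * N) \ A).sort (· ≤ ·)).getD (j - 1) 0 <
        ((A.sort (· ≤ ·))).getD (i - 1) 0 ↔ (A ∩ Finset.Icc 1 (i + j - 1)).card < i := by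
  set B := Finset.Icc 1 (2 * N) \ A with hB
  have hBc : B.card = N := by
    rw [hB, Finset.card_sdiff_of_subset hA, hc]; simp; omega
  -- the entries of the sorted list are the values of `Nat.nth` for membership in `S`
  have key : ∀ (S : Finset ℕ) (k : ℕ), k < S.card →
      (S.sort (· ≤ ·)).getD k 0 ∈ S ∧ Nat.count (· ∈ S) ((S.sort (· ≤ ·)).getD k 0) = k := by
    intro S k hk
    have hf : (Set.ofPred (· ∈ S)).Finite := S.finite_toSet
    have hS : hf.toFinset = S := by ext; simp
    have e : Nat.nth (· ∈ S) k = (S.sort (· ≤ ·)).getD k 0 := by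
      rw [Nat.nth_eq_getD_sort hf, hS]
    rw [← e]
    have hk' : ∀ hf : (Set.ofPred (· ∈ S)).Finite, k < hf.toFinset.card := by
      intro hf; rwa [show hf.toFinset = S by ext; simp]
    exact ⟨Nat.nth_mem k hk', Nat.count_nth hk'⟩
  obtain ⟨ha, hac⟩ := key A (i - 1) (by omega)
  obtain ⟨hb, hbc⟩ := key B (j - 1) (by omega)
  set a := (A.sort (· ≤ ·)).getD (i - 1) 0
  set b := (B.sort (· ≤ ·)).getD (j - 1) 0
  have hcA : Nat.count (· ∈ A) (i + j) = (A ∩ Finset.Icc 1 (i + j - 1)).card := by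
    rw [Nat.count_eq_card_filter_range]
    congr 1; ext x
    have := @hA x
    simp only [Finset.mem_filter, Finset.mem_range, Finset.mem_inter, Finset.mem_Icc] at *
    grind
  have hsum : Nat.count (· ∈ A) (i + j) + Nat.count (· ∈ B) (i + j) = i + j - 1 := by
    rw [Nat.count_eq_card_filter_range, Nat.count_eq_card_filter_range,
      ← Finset.card_union_of_disjoint]
    · have : Finset.filter (· ∈ A) (Finset.range (i + j)) ∪
          Finset.filter (· ∈ B) (Finset.range (i + j)) = Finset.Icc 1 (i + j - 1) := by
        ext x
        have := @hA x
        simp only [hB, Finset.mem_filter, Finset.mem_range, Finset.mem_union, Finset.mem_sdiff,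
          Finset.mem_Icc] at *
        grind
      rw [this]; simp
    · rw [Finset.disjoint_left]
      intro x hx hy
      simp only [hB, Finset.mem_filter, Finset.mem_sdiff] at hx hy
      exact hy.2.2 hx.2
  rw [← hcA]
  have ha1 : Nat.count (· ∈ A) (a + 1) = i := by
    rw [Nat.count_succ, hac, if_pos ha]; omega
  have hb1 : Nat.count (· ∈ B) (b + 1) = j := by
    rw [Nat.count_succ, hbc, if_pos hb]; omega
  have mA := Nat.count_monotone (· ∈ A)
  have mB := Nat.count_monotone (· ∈ B)
  constructor
  · intro hlt
    by_contra! h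
    have h1 : a < i + j := by
      by_contra! h'
      have := mA h'
      omega
    have h2 : i + j ≤ b := by
      by_contra! h'
      have := mB (Nat.succ_le_of_lt h')
      simp only [Nat.succ_eq_add_one] at this
      omega
    omega
  · intro h
    have h1 : i + j ≤ a := by
      by_contra! h'
      have := mA (Nat.succ_le_of_lt h')
      simp only [Nat.succ_eq_add_one] at this
      omega
    have h2 : b < i + j := by
      by_contra! h'
      have := mB h'
      omega
    omega

lemma binP_eq {N i j : ℕ} (hi : 1 ≤ i) (hi' : i ≤ N) (hj : 1 ≤ j) (hj' : j ≤ N) :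
    binP N i j = (((Finset.Icc 1 (2 * N)).powersetCard N).filter fun A =>
      (A ∩ Finset.Icc 1 (i + j - 1)).card < i).card := by
  rw [binP, if_pos ⟨hi, hi', hj, hj'⟩]
  congr 1
  apply Finset.filter_congr
  intro A hA
  rw [Finset.mem_powersetCard] at hA
  exact sort_lt_sort_iff hi hi' hj hj' hA.1 hA.2

/-- The number of `N`-subsets of `{1,…,2N}` with exactly `i` elements among the first `t` numbers
and not containing `t + 1`. -/
lemma card_flat_step {N i t : ℕ} (hi : i ≤ N) (ht : t + 1 ≤ 2 * N) :
    (((Finset.Icc 1 (2 * N)).powersetCard N).filter fun A =>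
      (A ∩ Finset.Icc 1 t).card = i ∧ t + 1 ∉ A).card =
      t.choose i * (2 * N - (t + 1)).choose (N - i) := by
  have h1 : t.choose i * (2 * N - (t + 1)).choose (N - i) =
      ((Finset.Icc 1 t).powersetCard i ×ˢ
        (Finset.Icc (t + 2) (2 * N)).powersetCard (N - i)).card := by
    rw [Finset.card_product, Finset.card_powersetCard, Finset.card_powersetCard, Nat.card_Icc,
      Nat.card_Icc]
    congr 2; omega
  rw [h1]
  -- `A` is cut into its parts below and above `t + 1`
  refine Finset.card_bij' (fun A _ => (A ∩ Finset.Icc 1 t, A ∩ Finset.Icc (t + 2) (2 * N)))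
    (fun P _ => P.1 ∪ P.2) ?_ ?_ ?_ ?_
  · intro A hA
    simp only [Finset.mem_filter, Finset.mem_powersetCard, Finset.mem_product] at hA ⊢
    obtain ⟨⟨hA, hc⟩, hci, hn⟩ := hA
    refine ⟨⟨Finset.inter_subset_right, hci⟩, Finset.inter_subset_right, ?_⟩
    have hu : A = (A ∩ Finset.Icc 1 t) ∪ (A ∩ Finset.Icc (t + 2) (2 * N)) := by
      ext x
      have := @hA x
      simp only [Finset.mem_union, Finset.mem_inter, Finset.mem_Icc] at *
      by_cases hx : x = t + 1
      · subst hx; simp [hn]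
      · grind
    have hd : Disjoint (A ∩ Finset.Icc 1 t) (A ∩ Finset.Icc (t + 2) (2 * N)) := by
      rw [Finset.disjoint_left]; intro x hx hy
      simp only [Finset.mem_inter, Finset.mem_Icc] at hx hy
      omega
    have := congrArg Finset.card hu
    rw [Finset.card_union_of_disjoint hd] at this
    omega
  · rintro ⟨U, V⟩ hP
    simp only [Finset.mem_filter, Finset.mem_powersetCard, Finset.mem_product] at hP ⊢
    obtain ⟨⟨hU, hUc⟩, hV, hVc⟩ := hP
    have hd : Disjoint U V := by
      rw [Finset.disjoint_left]; intro x hx hy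
      have := hU hx
      have := hV hy
      simp only [Finset.mem_Icc] at *
      omega
    refine ⟨⟨?_, ?_⟩, ?_, ?_⟩
    · intro x hx
      have := @hU x
      have := @hV x
      simp only [Finset.mem_union, Finset.mem_Icc] at *
      grind
    · rw [Finset.card_union_of_disjoint hd]; omega
    · rw [← hUc]; congr 1; ext x
      have := @hU x
      have := @hV x
      simp only [Finset.mem_union, Finset.mem_inter, Finset.mem_Icc] at *
      grind
    · intro hx
      have := @hU (t + 1)
      have := @hV (t + 1)
      simp only [Finset.mem_union, Finset.mem_Icc] at *
      grind
  · intro A hA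
    simp only [Finset.mem_filter, Finset.mem_powersetCard] at hA
    obtain ⟨⟨hA, hc⟩, hci, hn⟩ := hA
    ext x
    have := @hA x
    simp only [Finset.mem_union, Finset.mem_inter, Finset.mem_Icc] at *
    by_cases hx : x = t + 1
    · subst hx; simp [hn]
    · grind
  · rintro ⟨U, V⟩ hP
    simp only [Finset.mem_powersetCard, Finset.mem_product] at hP
    obtain ⟨⟨hU, hUc⟩, hV, hVc⟩ := hP
    ext x <;>
    · have := @hU x
      have := @hV x
      simp only [Finset.mem_union, Finset.mem_inter, Finset.mem_Icc] at *
      grind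

/-- Going from `#(A ∩ [1,t]) < i` to `#(A ∩ [1,t+1]) < i + 1` gains exactly the sets that have
`i` elements up to `t` and skip `t + 1`. -/
lemma card_step {N i t : ℕ} (hi : i ≤ N) (ht : t + 1 ≤ 2 * N) :
    (((Finset.Icc 1 (2 * N)).powersetCard N).filter fun A =>
      (A ∩ Finset.Icc 1 (t + 1)).card < i + 1).card =
    (((Finset.Icc 1 (2 * N)).powersetCard N).filter fun A =>
      (A ∩ Finset.Icc 1 t).card < i).card + t.choose i * (2 * N - (t + 1)).choose (N - i) := by
  rw [← card_flat_step hi ht, ← Finset.card_union_of_disjoint]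
  · congr 1
    rw [← Finset.filter_or]
    apply Finset.filter_congr
    intro A _
    have hI : Finset.Icc 1 (t + 1) = insert (t + 1) (Finset.Icc 1 t) := by
      ext x; simp only [Finset.mem_insert, Finset.mem_Icc]; omega
    by_cases h : t + 1 ∈ A
    · rw [hI, Finset.inter_insert_of_mem h, Finset.card_insert_of_notMem (by simp)]
      simp [h]
    · rw [hI, Finset.inter_insert_of_notMem h]
      simp only [h, not_false_eq_true, and_true]
      omega
  · rw [Finset.disjoint_filter]
    intro A _ h1 h2
    omega

/-- Mixed Monge property on unit squares of `P^N`. -/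
theorem mixed_monge (N i j : ℕ) (hN : 0 < N) (hi : 1 ≤ i) (hi' : i ≤ N - 1)
    (hj : 1 ≤ j) (hj' : j ≤ N - 1) :
    (i < j → binP N i j + binP N (i + 1) (j + 1) < binP N (i + 1) j + binP N i (j + 1)) ∧
    (j < i → binP N (i + 1) j + binP N i (j + 1) < binP N i j + binP N (i + 1) (j + 1)) ∧
    (i = j → binP N i j + binP N (i + 1) (j + 1) = binP N (i + 1) j + binP N i (j + 1)) := by
  obtain ⟨m, hm⟩ : ∃ m, i + j = m + 1 := ⟨i + j - 1, by omega⟩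
  obtain ⟨q, hq⟩ : ∃ q, 2 * N = q + (m + 1) + 1 := ⟨2 * N - (m + 2), by omega⟩
  -- horizontal differences of `binP` along the two rows
  have e1 : binP N (i + 1) j = binP N i j + m.choose i * (q + 1).choose (N - i) := by
    rw [binP_eq (by omega) (by omega) hj (by omega), binP_eq hi (by omega) hj (by omega),
      show i + 1 + j - 1 = m + 1 by omega, show i + j - 1 = m by omega,
      card_step (by omega) (by omega), show 2 * N - (m + 1) = q + 1 by omega]
  have e2 : binP N (i + 1) (j + 1) =
      binP N i (j + 1) + (m + 1).choose i * q.choose (N - i) := by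
    rw [binP_eq (by omega) (by omega) (by omega) (by omega),
      binP_eq hi (by omega) (by omega) (by omega),
      show i + 1 + (j + 1) - 1 = m + 1 + 1 by omega, show i + (j + 1) - 1 = m + 1 by omega,
      card_step (by omega) (by omega), show 2 * N - (m + 1 + 1) = q by omega]
  have c1 := Nat.choose_mul_succ_eq m i
  have c2 := Nat.choose_mul_succ_eq q (N - i)
  rw [show m + 1 - i = j by omega] at c1
  obtain ⟨d, hd⟩ : ∃ d, N = j + d := ⟨N - j, by omega⟩
  rw [show q + 1 - (N - i) = d by omega] at c2
  have hR : 0 < m.choose i * (q + 1).choose (N - i) :=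
    Nat.mul_pos (Nat.choose_pos (by omega)) (Nat.choose_pos (by omega))
  rw [e1, e2]
  set R := m.choose i * (q + 1).choose (N - i) with hRd
  set L := (m + 1).choose i * q.choose (N - i) with hLd
  have hLR : L * (j * (q + 1)) = R * ((m + 1) * d) := by
    rw [hRd, hLd]
    calc _ = ((m + 1).choose i * j) * (q.choose (N - i) * (q + 1)) := by ring
      _ = _ := by rw [← c1, c2]; ring
  -- the two weights differ by `N * (j - i)`
  have hw : j * (q + 1) + N * i = (m + 1) * d + N * j := by
    have : q + 1 + i = j + 2 * d := by omega
    rw [← hm, hd]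
    nlinarith
  have hpos : 0 < j * (q + 1) := by positivity
  refine ⟨fun h => ?_, fun h => ?_, fun h => ?_⟩
  · have h1 : N * i < N * j := Nat.mul_lt_mul_of_pos_left h hN
    have : L < R := by
      by_contra! h'
      have : (m + 1) * d < j * (q + 1) := by omega
      exact absurd hLR (Nat.ne_of_gt
        ((Nat.mul_lt_mul_of_pos_left this hR).trans_le (Nat.mul_le_mul_right _ h')))
    omega
  · have h1 : N * j < N * i := Nat.mul_lt_mul_of_pos_left h hN
    have : R < L := by
      by_contra! h'
      have : j * (q + 1) < (m + 1) * d := by omega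
      exact absurd hLR (Nat.ne_of_lt
        ((Nat.mul_le_mul_right _ h').trans_lt (Nat.mul_lt_mul_of_pos_left this hR)))
    omega
  · subst h
    have : (m + 1) * d = i * (q + 1) := by omega
    rw [this] at hLR
    have := Nat.eq_of_mul_eq_mul_right hpos hLR
    omega
end

section
/- (Extrema at the center of diagonals) For all positive integers N, k, i with k ≥ 1 and 1 ≤ i ≤ N−k−1: on the k-th diagonal above the main diagonal, p(N,i+1,i+k+1) > p(N,i,i+k) if 2i+k < N, p(N,i+1,i+k+1) = p(N,i,i+k) if 2i+k = N, and p(N,i+1,i+k+1) < p(N,i,i+k) if 2i+k > N; on the k-th diagonal below the main diagonal, p(N,i+k+1,i+1) < p(N,i+k,i) if 2i+k < N, p(N,i+k+1,i+1) = p(N,i+k,i) if 2i+k = N, and p(N,i+k+1,i+1) > p(N,i+k,i) if 2i+k > N. -/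
/-- The `r`-th entry (counted from `0`) of the increasing enumeration of `A` is at most `x` iff `A`
has more than `r` elements that are at most `x`. -/
lemma sort_getD_le_iff (A : Finset ℕ) (r x : ℕ) (hr : r < A.card) :
    (A.sort (· ≤ ·)).getD r 0 ≤ x ↔ r < (A.filter (· ≤ x)).card := by
  have he : (A.sort (· ≤ ·)).getD r 0 = A.orderEmbOfFin rfl ⟨r, hr⟩ := by
    rw [Finset.orderEmbOfFin_apply, List.getD_eq_getElem _ _ (by simpa using hr)]
    rfl
  rw [he]
  set e := A.orderEmbOfFin rfl with hedef
  constructor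
  · intro h
    have hsub : (Finset.Iic (⟨r, hr⟩ : Fin A.card)).map e.toEmbedding ⊆ A.filter (· ≤ x) := by
      intro y hy
      simp only [Finset.mem_map, Finset.mem_Iic] at hy
      obtain ⟨q, hq, rfl⟩ := hy
      exact Finset.mem_filter.2
        ⟨Finset.orderEmbOfFin_mem A rfl q, (e.monotone hq).trans h⟩
    have := Finset.card_le_card hsub
    rw [Finset.card_map, Fin.card_Iic] at this
    exact this
  · intro h
    by_contra! hx
    have hsub : A.filter (· ≤ x) ⊆ (Finset.Iio (⟨r, hr⟩ : Fin A.card)).map e.toEmbedding := by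
      intro y hy
      obtain ⟨hyA, hyx⟩ := Finset.mem_filter.1 hy
      have hy' : y ∈ Set.range e := by
        rw [hedef, Finset.range_orderEmbOfFin]; exact hyA
      obtain ⟨q, rfl⟩ := hy'
      simp only [Finset.mem_map, Finset.mem_Iio]
      exact ⟨q, e.lt_iff_lt.1 (lt_of_le_of_lt hyx hx), rfl⟩
    have := Finset.card_le_card hsub
    rw [Finset.card_map, Fin.card_Iio] at this
    simp only at this
    omega

/-- The comparison of order statistics defining `binP` as a condition on how many of
`1, …, i + j - 1` lie in `A`. -/
lemma binP_eq_card (N i j : ℕ) (hi : 1 ≤ i) (hiN : i ≤ N) (hj : 1 ≤ j) (hjN : j ≤ N) :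
    binP N i j = (((Finset.Icc 1 (2 * N)).powersetCard N).filter fun A =>
      (A.filter (· ≤ i + j - 1)).card < i).card := by
  rw [binP, if_pos ⟨hi, hiN, hj, hjN⟩]
  congr 1
  apply Finset.filter_congr
  intro A hA
  obtain ⟨hAs, hAc⟩ := Finset.mem_powersetCard.1 hA
  have hBc : (Finset.Icc 1 (2 * N) \ A).card = N := by
    rw [Finset.card_sdiff_of_subset hAs, hAc, Nat.card_Icc]; omega
  have ha := sort_getD_le_iff A (i - 1) (i + j - 1) (by omega)
  have hb := sort_getD_le_iff (Finset.Icc 1 (2 * N) \ A) (j - 1) (i + j - 1) (by omega)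
  have hsum : (A.filter (· ≤ i + j - 1)).card
      + ((Finset.Icc 1 (2 * N) \ A).filter (· ≤ i + j - 1)).card = i + j - 1 := by
    rw [← Finset.card_union_of_disjoint
      (Finset.disjoint_filter_filter Finset.disjoint_sdiff), ← Finset.filter_union,
      Finset.union_sdiff_of_subset hAs]
    have : (Finset.Icc 1 (2 * N)).filter (· ≤ i + j - 1) = Finset.Icc 1 (i + j - 1) := by
      ext x; simp only [Finset.mem_filter, Finset.mem_Icc]; omega
    rw [this, Nat.card_Icc]; omega
  omega

/-- The number of `N`-subsets of `[1, 2N]` with a prescribed number `a` of elements in `[1, m]` and a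
prescribed trace `U` on `{m + 1, m + 2}`. -/
lemma card_block (N m a : ℕ) (U : Finset ℕ) (hm : m + 2 ≤ 2 * N)
    (hU : U ⊆ Finset.Icc (m + 1) (m + 2)) (haU : a + U.card ≤ N) :
    (((Finset.Icc 1 (2 * N)).powersetCard N).filter fun A =>
      (A.filter (· ≤ m)).card = a ∧ A ∩ Finset.Icc (m + 1) (m + 2) = U).card
      = m.choose a * (2 * N - m - 2).choose (N - a - U.card) := by
  have hS : m.choose a = ((Finset.Icc 1 m).powersetCard a).card := by
    rw [Finset.card_powersetCard, Nat.card_Icc]; rfl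
  have hT : (2 * N - m - 2).choose (N - a - U.card)
      = ((Finset.Icc (m + 3) (2 * N)).powersetCard (N - a - U.card)).card := by
    rw [Finset.card_powersetCard, Nat.card_Icc]; congr 1; omega
  have hU' : ∀ x ∈ U, m + 1 ≤ x ∧ x ≤ m + 2 := fun x hx => Finset.mem_Icc.1 (hU hx)
  rw [hS, hT, ← Finset.card_product]
  refine Finset.card_nbij' (fun A => (A.filter (· ≤ m), A.filter (m + 3 ≤ ·)))
    (fun PQ => PQ.1 ∪ U ∪ PQ.2) ?_ ?_ ?_ ?_
  · intro A hA
    simp only [Finset.coe_filter, Set.mem_ofPred_eq, Finset.mem_powersetCard] at hA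
    obtain ⟨⟨hAs, hAc⟩, hAa, hAU⟩ := hA
    have hA' : ∀ x ∈ A, 1 ≤ x ∧ x ≤ 2 * N := fun x hx => Finset.mem_Icc.1 (hAs hx)
    have hsplit : A = (A.filter (· ≤ m) ∪ U) ∪ A.filter (m + 3 ≤ ·) := by
      ext x
      simp only [← hAU, Finset.mem_union, Finset.mem_filter, Finset.mem_inter, Finset.mem_Icc]
      by_cases hx : x ∈ A <;> simp only [hx, true_and, false_and, or_self, true_iff]
      omega
    have hd1 : Disjoint (A.filter (· ≤ m)) U := by
      rw [Finset.disjoint_left]; intro x hx hxU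
      have := (Finset.mem_filter.1 hx).2
      have := hU' x hxU
      omega
    have hd2 : Disjoint (A.filter (· ≤ m) ∪ U) (A.filter (m + 3 ≤ ·)) := by
      rw [Finset.disjoint_left]; intro x hx hxQ
      have h3 := (Finset.mem_filter.1 hxQ).2
      rcases Finset.mem_union.1 hx with h | h
      · have := (Finset.mem_filter.1 h).2
        omega
      · have := hU' x h
        omega
    have hcard := congrArg Finset.card hsplit
    rw [Finset.card_union_of_disjoint hd2, Finset.card_union_of_disjoint hd1] at hcard
    simp only [Finset.coe_product, Set.mem_prod, Finset.mem_coe, Finset.mem_powersetCard]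
    refine ⟨⟨?_, hAa⟩, ?_, by omega⟩
    · intro x hx
      obtain ⟨h1, h2⟩ := Finset.mem_filter.1 hx
      exact Finset.mem_Icc.2 ⟨(hA' x h1).1, h2⟩
    · intro x hx
      obtain ⟨h1, h2⟩ := Finset.mem_filter.1 hx
      exact Finset.mem_Icc.2 ⟨h2, (hA' x h1).2⟩
  · rintro ⟨P, Q⟩ hPQ
    simp only [Finset.coe_product, Set.mem_prod, Finset.mem_coe, Finset.mem_powersetCard] at hPQ
    obtain ⟨⟨hP, hPc⟩, hQ, hQc⟩ := hPQ
    have hP' : ∀ x ∈ P, 1 ≤ x ∧ x ≤ m := fun x hx => Finset.mem_Icc.1 (hP hx)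
    have hQ' : ∀ x ∈ Q, m + 3 ≤ x ∧ x ≤ 2 * N := fun x hx => Finset.mem_Icc.1 (hQ hx)
    have hd1 : Disjoint P U := by
      rw [Finset.disjoint_left]; intro x hx hxU
      have := hP' x hx
      have := hU' x hxU
      omega
    have hd2 : Disjoint (P ∪ U) Q := by
      rw [Finset.disjoint_left]; intro x hx hxQ
      have h3 := hQ' x hxQ
      rcases Finset.mem_union.1 hx with h | h
      · have := hP' x h
        omega
      · have := hU' x h
        omega
    simp only [Finset.coe_filter, Set.mem_ofPred_eq, Finset.mem_powersetCard]
    refine ⟨⟨?_, ?_⟩, ?_, ?_⟩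
    · intro x hx
      simp only [Finset.mem_union] at hx
      rw [Finset.mem_Icc]
      grind
    · rw [Finset.card_union_of_disjoint hd2, Finset.card_union_of_disjoint hd1]; omega
    · rw [← hPc]; congr 1
      ext x
      simp only [Finset.mem_filter, Finset.mem_union]
      grind
    · ext x
      simp only [Finset.mem_inter, Finset.mem_union, Finset.mem_Icc]
      grind
  · intro A hA
    simp only [Finset.coe_filter, Set.mem_ofPred_eq, Finset.mem_powersetCard] at hA
    obtain ⟨-, -, hAU⟩ := hA
    ext x
    simp only [← hAU, Finset.mem_union, Finset.mem_filter, Finset.mem_inter, Finset.mem_Icc]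
    by_cases hx : x ∈ A <;> simp only [hx, true_and, false_and, or_self, iff_true]
    omega
  · rintro ⟨P, Q⟩ hPQ
    simp only [Finset.coe_product, Set.mem_prod, Finset.mem_coe, Finset.mem_powersetCard] at hPQ
    obtain ⟨⟨hP, hPc⟩, hQ, hQc⟩ := hPQ
    have hP' : ∀ x ∈ P, 1 ≤ x ∧ x ≤ m := fun x hx => Finset.mem_Icc.1 (hP hx)
    have hQ' : ∀ x ∈ Q, m + 3 ≤ x ∧ x ≤ 2 * N := fun x hx => Finset.mem_Icc.1 (hQ hx)
    refine Prod.ext ?_ ?_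
    · ext x
      simp only [Finset.mem_filter, Finset.mem_union]
      grind
    · ext x
      simp only [Finset.mem_filter, Finset.mem_union]
      grind

/-- One diagonal step: the new count plus the number of lost sets equals the old count plus the
number of gained sets. -/
lemma binP_step (N i j : ℕ) (hi : 1 ≤ i) (hiN : i + 1 ≤ N) (hj : 1 ≤ j) (hjN : j + 1 ≤ N) :
    binP N (i + 1) (j + 1)
        + (i + j - 1).choose (i - 1) * (2 * N - (i + j - 1) - 2).choose (N - i - 1)
      = binP N i j + (i + j - 1).choose i * (2 * N - (i + j - 1) - 2).choose (N - i) := by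
  rw [binP_eq_card N (i + 1) (j + 1) (by omega) hiN (by omega) hjN,
    binP_eq_card N i j hi (by omega) hj (by omega)]
  have hm : i + 1 + (j + 1) - 1 = (i + j - 1) + 2 := by omega
  rw [hm]
  have hmN : i + j - 1 + 2 ≤ 2 * N := by omega
  generalize i + j - 1 = m at *
  have hG := card_block N m i ∅ hmN (by simp) (by simp; omega)
  have hL := card_block N m (i - 1) (Finset.Icc (m + 1) (m + 2)) hmN subset_rfl
    (by rw [Nat.card_Icc]; omega)
  rw [Nat.card_Icc, show N - (i - 1) - (m + 2 + 1 - (m + 1)) = N - i - 1 by omega] at hL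
  rw [Finset.card_empty, Nat.sub_zero] at hG
  rw [← hG, ← hL]
  set Ω := (Finset.Icc 1 (2 * N)).powersetCard N
  have hsplit : ∀ A : Finset ℕ, (A.filter (· ≤ m + 2)).card
      = (A.filter (· ≤ m)).card + (A ∩ Finset.Icc (m + 1) (m + 2)).card := by
    intro A
    rw [← Finset.card_union_of_disjoint]
    · congr 1
      ext x
      simp only [Finset.mem_filter, Finset.mem_union, Finset.mem_inter, Finset.mem_Icc]
      by_cases hx : x ∈ A <;> simp only [hx, true_and, false_and, or_self]
      omega
    · rw [Finset.disjoint_left]; intro x hx hx'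
      simp only [Finset.mem_filter, Finset.mem_inter, Finset.mem_Icc] at hx hx'
      omega
  have hle : ∀ A : Finset ℕ, (A ∩ Finset.Icc (m + 1) (m + 2)).card ≤ 2 := fun A =>
    (Finset.card_le_card Finset.inter_subset_right).trans (by rw [Nat.card_Icc]; omega)
  have hfull : ∀ A : Finset ℕ, A ∩ Finset.Icc (m + 1) (m + 2) = Finset.Icc (m + 1) (m + 2) ↔
      (A ∩ Finset.Icc (m + 1) (m + 2)).card = 2 := by
    intro A
    constructor
    · intro h; rw [h, Nat.card_Icc]; omega
    · intro h
      exact Finset.eq_of_subset_of_card_le Finset.inter_subset_right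
        (by rw [h, Nat.card_Icc]; omega)
  have hgain : (Ω.filter fun A => (A.filter (· ≤ m)).card = i ∧
      A ∩ Finset.Icc (m + 1) (m + 2) = ∅)
      = (Ω.filter fun A => (A.filter (· ≤ m + 2)).card < i + 1) \
        (Ω.filter fun A => (A.filter (· ≤ m)).card < i) := by
    ext A
    simp only [Finset.mem_filter, Finset.mem_sdiff, hsplit A, ← Finset.card_eq_zero]
    by_cases hA : A ∈ Ω <;> simp only [hA, true_and, false_and]
    omega
  have hloss : (Ω.filter fun A => (A.filter (· ≤ m)).card = i - 1 ∧
      A ∩ Finset.Icc (m + 1) (m + 2) = Finset.Icc (m + 1) (m + 2))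
      = (Ω.filter fun A => (A.filter (· ≤ m)).card < i) \
        (Ω.filter fun A => (A.filter (· ≤ m + 2)).card < i + 1) := by
    ext A
    have := hle A
    simp only [Finset.mem_filter, Finset.mem_sdiff, hsplit A, hfull A]
    by_cases hA : A ∈ Ω <;> simp only [hA, true_and, false_and]
    omega
  rw [hgain, hloss]
  generalize (Ω.filter fun A => (A.filter (· ≤ m)).card < i) = E
  generalize (Ω.filter fun A => (A.filter (· ≤ m + 2)).card < i + 1) = E'
  rw [add_comm E'.card, add_comm E.card, Finset.card_sdiff_add_card, Finset.card_sdiff_add_card,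
    Finset.union_comm]

/-- The numbers `P` of lost and `Q` of gained sets in a diagonal step satisfy
`Q / P = j (N - j) / (i (N - i))`. -/
lemma binP_step_ratio (N i j : ℕ) (hi : 1 ≤ i) (hiN : i + 1 ≤ N) (hj : 1 ≤ j) (hjN : j + 1 ≤ N) :
    ∃ P Q : ℕ, 0 < P ∧ binP N (i + 1) (j + 1) + P = binP N i j + Q ∧
      Q * (i * (N - i)) = P * (j * (N - j)) := by
  refine ⟨_, _, ?_, binP_step N i j hi hiN hj hjN, ?_⟩
  · exact Nat.mul_pos (Nat.choose_pos (by omega)) (Nat.choose_pos (by omega))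
  · have h1 := Nat.choose_succ_right_eq (i + j - 1) (i - 1)
    have h2 := Nat.choose_succ_right_eq (2 * N - (i + j - 1) - 2) (N - i - 1)
    rw [show i - 1 + 1 = i by omega, show i + j - 1 - (i - 1) = j by omega] at h1
    rw [show N - i - 1 + 1 = N - i by omega,
      show 2 * N - (i + j - 1) - 2 - (N - i - 1) = N - j by omega] at h2
    calc _ = ((i + j - 1).choose i * i)
          * ((2 * N - (i + j - 1) - 2).choose (N - i) * (N - i)) := by ring
      _ = _ := by rw [h1, h2]; ring

/-- The three cases of a diagonal step, according to the sign of `j (N - j) - i (N - i)`. -/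
lemma binP_step_compare (N i j : ℕ) (hi : 1 ≤ i) (hiN : i + 1 ≤ N) (hj : 1 ≤ j)
    (hjN : j + 1 ≤ N) :
    (i * (N - i) < j * (N - j) → binP N i j < binP N (i + 1) (j + 1)) ∧
    (i * (N - i) = j * (N - j) → binP N (i + 1) (j + 1) = binP N i j) ∧
    (j * (N - j) < i * (N - i) → binP N (i + 1) (j + 1) < binP N i j) := by
  obtain ⟨P, Q, hP, hstep, hratio⟩ := binP_step_ratio N i j hi hiN hj hjN
  have hu : 0 < i * (N - i) := Nat.mul_pos hi (by omega)
  generalize i * (N - i) = u at *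
  generalize j * (N - j) = v at *
  refine ⟨fun h => ?_, fun h => ?_, fun h => ?_⟩
  · have : P < Q := by
      by_contra! hc
      nlinarith
    omega
  · subst h
    have := Nat.eq_of_mul_eq_mul_right hu hratio
    omega
  · have : Q < P := by
      by_contra! hc
      nlinarith
    omega

/-- Extrema at the center of diagonals: monotonicity of consecutive entries along the
`k`-th diagonals above and below the main diagonal, according to the sign of `N − 2i − k`. -/
theorem diagonal_extrema (N k i : ℕ) (hN : 0 < N) (hk : 1 ≤ k) (hi : 1 ≤ i)
    (hi' : i ≤ N - k - 1) :
    ((2 * i + k < N → binP N i (i + k) < binP N (i + 1) (i + k + 1)) ∧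
     (2 * i + k = N → binP N (i + 1) (i + k + 1) = binP N i (i + k)) ∧
     (N < 2 * i + k → binP N (i + 1) (i + k + 1) < binP N i (i + k))) ∧
    ((2 * i + k < N → binP N (i + k + 1) (i + 1) < binP N (i + k) i) ∧
     (2 * i + k = N → binP N (i + k + 1) (i + 1) = binP N (i + k) i) ∧
     (N < 2 * i + k → binP N (i + k) i < binP N (i + k + 1) (i + 1))) := by
  obtain ⟨a1, a2, a3⟩ := binP_step_compare N i (i + k) hi (by omega) (by omega) (by omega)
  obtain ⟨b1, b2, b3⟩ := binP_step_compare N (i + k) i (by omega) (by omega) hi (by omega)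
  -- In terms of `t = N - i - k`, the two products are `i (k + t)` and `(i + k) t`; they differ by
  -- `k (t - i)`.
  obtain ⟨t, rfl⟩ : ∃ t, N = i + k + t := ⟨N - (i + k), by omega⟩
  rw [show i + k + t - i = k + t by omega, show i + k + t - (i + k) = t by omega] at *
  have hlt : 2 * i + k < i + k + t → i * (k + t) < (i + k) * t := fun h => by
    have : i < t := by omega
    nlinarith
  have heq : 2 * i + k = i + k + t → i * (k + t) = (i + k) * t := fun h => by
    obtain rfl : i = t := by omega
    ring
  have hgt : i + k + t < 2 * i + k → (i + k) * t < i * (k + t) := fun h => by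
    have : t < i := by omega
    nlinarith
  exact ⟨⟨fun h => a1 (hlt h), fun h => a2 (heq h), fun h => a3 (hgt h)⟩,
    fun h => b3 (hlt h), fun h => b2 (heq h).symm, fun h => b1 (hgt h)⟩
end
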